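/- arXiv:1911.05555 — 4 statements merged into one kernel-verified Lean document; each statement's English description precedes it below -/
import Mathlib

section
/- For any K, k ∈ T^d, the discrete spectrum of h(K,k) equals the zero set of the Fredholm determinant outside the essential spectrum: σ_disc(h(K,k)) = {z ∈ ℂ \ [E_min(K,k), E_max(K,k)] : Δ_K(k; z) = 0}. -/
open MeasureTheory Complex Filter Topology Set

noncomputable section

instance fact2pi : Fact (0 < 2 * Real.pi) := ⟨by positivity⟩

/-- The d-dimensional torus `(-π, π]^d` with its Haar (Lebesgue) measure. -/
abbrev Td (d : ℕ) : Type := Fin d → AddCircle (2 * Real.pi)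

/-- The Hilbert space `L²(T^d)`. -/
abbrev L2 (d : ℕ) := Lp ℂ 2 (volume : Measure (Td d))

/-- The Hilbert space `L²((T^d)²)`. -/
abbrev L2two (d : ℕ) := Lp ℂ 2 (volume : Measure (Td d × Td d))

/-- The Hilbert space `ℂ ⊕ L²(T^d)`. -/
abbrev Hkk (d : ℕ) := WithLp 2 (ℂ × L2 d)

/-- The zero-particle component of an element of `ℂ ⊕ L²(T^d)`. -/
def pk1 {d : ℕ} (f : Hkk d) : ℂ := (WithLp.equiv 2 (ℂ × L2 d) f).1

/-- The one-particle component of an element of `ℂ ⊕ L²(T^d)`. -/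
def pk2 {d : ℕ} (f : Hkk d) : L2 d := (WithLp.equiv 2 (ℂ × L2 d) f).2

/-- The discrete spectrum of a bounded operator: the set of isolated eigenvalues of finite
multiplicity. -/
def discSpec {H' : Type*} [NormedAddCommGroup H'] [InnerProductSpace ℂ H']
    (A : H' →L[ℂ] H') : Set ℂ :=
  {z | (∃ f, f ≠ 0 ∧ A f = z • f) ∧ z ∉ closure (spectrum ℂ A \ {z}) ∧
       FiniteDimensional ℂ (LinearMap.ker (A - z • (1 : H' →L[ℂ] H')).toLinearMap)}

variable {d : ℕ}

/-- `E_min(K,k) = min_q w₂(K; k, q)`. -/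
def Emin (w₂ : Td d → Td d → Td d → ℝ) (K k : Td d) : ℝ := ⨅ q, w₂ K k q

/-- `E_max(K,k) = max_q w₂(K; k, q)`. -/
def Emax (w₂ : Td d → Td d → Td d → ℝ) (K k : Td d) : ℝ := ⨆ q, w₂ K k q

/-- `m_K = min_{p,q} w₂(K; p, q)`. -/
def mK (w₂ : Td d → Td d → Td d → ℝ) (K : Td d) : ℝ := ⨅ x : Td d × Td d, w₂ K x.1 x.2

/-- `M_K = max_{p,q} w₂(K; p, q)`. -/
def MK (w₂ : Td d → Td d → Td d → ℝ) (K : Td d) : ℝ := ⨆ x : Td d × Td d, w₂ K x.1 x.2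

/-- The Fredholm determinant
`Δ_K(k; z) = w₁(K,k) − z − (1/2) ∫ v₁(t)² / (w₂(K;k,t) − z) dt`. -/
def Delta (v₁ : Td d → ℝ) (w₁ : Td d → Td d → ℝ) (w₂ : Td d → Td d → Td d → ℝ)
    (K k : Td d) (z : ℂ) : ℂ :=
  (w₁ K k : ℂ) - z - (1 / 2) * ∫ t, (v₁ t : ℂ) ^ 2 / ((w₂ K k t : ℂ) - z)

/-- The interval `[E_min(K,k), E_max(K,k)]`, viewed inside `ℂ`. -/
def bandKk (w₂ : Td d → Td d → Td d → ℝ) (K k : Td d) : Set ℂ :=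
  Complex.ofReal '' Set.Icc (Emin w₂ K k) (Emax w₂ K k)

/-- The interval `[m_K, M_K]`, viewed inside `ℂ`. -/
def bigBand (w₂ : Td d → Td d → Td d → ℝ) (K : Td d) : Set ℂ :=
  Complex.ofReal '' Set.Icc (mK w₂ K) (MK w₂ K)

/-- The two-particle branch
`Λ_K = {z : ∃ k, z ∉ [E_min(K,k), E_max(K,k)] ∧ Δ_K(k; z) = 0}`. -/
def LamK (v₁ : Td d → ℝ) (w₁ : Td d → Td d → ℝ) (w₂ : Td d → Td d → Td d → ℝ)
    (K : Td d) : Set ℂ :=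
  {z | ∃ k, z ∉ bandKk w₂ K k ∧ Delta v₁ w₁ w₂ K k z = 0}

/-- `Σ_K = [m_K, M_K] ∪ Λ_K`. -/
def SigK (v₁ : Td d → ℝ) (w₁ : Td d → Td d → ℝ) (w₂ : Td d → Td d → Td d → ℝ)
    (K : Td d) : Set ℂ :=
  bigBand w₂ K ∪ LamK v₁ w₁ w₂ K

/-- The defining equations of the generalized Friedrichs model `h(K, k)` acting on
`ℂ ⊕ L²(T^d)`:
`(h f)₀ = w₁(K,k) f₀ + (1/√2) ∫ v₁(s) f₁(s) ds` and
`(h f)₁(q) = (1/√2) v₁(q) f₀ + w₂(K; k, q) f₁(q)` (the first off-diagonal entry is `h₀₁` and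
the second is its adjoint `h₀₁*`). -/
def IsGenFriedrichs {d : ℕ} (v₁ : Td d → ℝ) (w₁ : Td d → Td d → ℝ)
    (w₂ : Td d → Td d → Td d → ℝ) (K k : Td d) (h : Hkk d →L[ℂ] Hkk d) : Prop :=
  ∀ f : Hkk d,
    (pk1 (h f) = (w₁ K k : ℂ) * pk1 f +
        (Real.sqrt 2 : ℂ)⁻¹ * (∫ s, (v₁ s : ℂ) * (pk2 f) s)) ∧
    (⇑(pk2 (h f)) =ᵐ[volume] fun q =>
        (Real.sqrt 2 : ℂ)⁻¹ * (v₁ q : ℂ) * pk1 f + (w₂ K k q : ℂ) * (pk2 f) q)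

theorem gf_ext {d : ℕ} {f g : Hkk d} (h1 : pk1 f = pk1 g) (h2 : pk2 f = pk2 g) : f = g := by
  apply (WithLp.equiv 2 (ℂ × L2 d)).injective
  exact Prod.ext h1 h2

/-- Assemble an element of the direct sum from its components. -/
def gfMk {d : ℕ} (a : ℂ) (f : L2 d) : Hkk d := WithLp.toLp 2 (a, f)

theorem pk1_gfMk {d : ℕ} (a : ℂ) (f : L2 d) : pk1 (gfMk a f) = a := rfl
theorem pk2_gfMk {d : ℕ} (a : ℂ) (f : L2 d) : pk2 (gfMk a f) = f := rfl
theorem pk1_sub {d : ℕ} (f g : Hkk d) : pk1 (f - g) = pk1 f - pk1 g := rfl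
theorem pk2_sub {d : ℕ} (f g : Hkk d) : pk2 (f - g) = pk2 f - pk2 g := rfl
theorem pk1_smul {d : ℕ} (c : ℂ) (f : Hkk d) : pk1 (c • f) = c * pk1 f := rfl
theorem pk2_smul {d : ℕ} (c : ℂ) (f : Hkk d) : pk2 (c • f) = c • pk2 f := rfl

theorem gf_mul {d : ℕ} {m : Td d → ℂ} (hm : Continuous m) {g : Td d → ℂ}
    (hg : MemLp g 2 volume) : MemLp (fun q => m q * g q) 2 (volume : Measure (Td d)) := by
  have h1 : MemLp m ⊤ (volume : Measure (Td d)) :=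
    hm.memLp_top_of_hasCompactSupport (HasCompactSupport.of_compactSpace m) _
  exact MemLp.mul hg h1

theorem gf_memLp {d : ℕ} {m : Td d → ℂ} (hm : Continuous m) :
    MemLp m 2 (volume : Measure (Td d)) :=
  (hm.memLp_top_of_hasCompactSupport (HasCompactSupport.of_compactSpace m) _).mono_exponent le_top

theorem gf_int {d : ℕ} {g : Td d → ℂ} (hg : MemLp g 2 volume) :
    Integrable g (volume : Measure (Td d)) := hg.integrable (by norm_num)

theorem gf_apply {d : ℕ} {v₁ : Td d → ℝ} {w₁ : Td d → Td d → ℝ}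
    {w₂ : Td d → Td d → Td d → ℝ} {K k : Td d} {h : Hkk d →L[ℂ] Hkk d}
    (hh : IsGenFriedrichs v₁ w₁ w₂ K k h) (z : ℂ) (f g : Hkk d) :
    (h - z • (1 : Hkk d →L[ℂ] Hkk d)) f = g ↔
      ((w₁ K k : ℂ) - z) * pk1 f + (Real.sqrt 2 : ℂ)⁻¹ * (∫ s, (v₁ s : ℂ) * (pk2 f) s) = pk1 g ∧
      ∀ᵐ q, (Real.sqrt 2 : ℂ)⁻¹ * (v₁ q : ℂ) * pk1 f + ((w₂ K k q : ℂ) - z) * (pk2 f) q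
        = pk2 g q := by
  have e : (h - z • (1 : Hkk d →L[ℂ] Hkk d)) f = h f - z • f := by simp
  obtain ⟨h1, h2⟩ := hh f
  rw [e]
  have h3 : ⇑(pk2 (h f - z • f)) =ᵐ[volume] fun q =>
      (Real.sqrt 2 : ℂ)⁻¹ * (v₁ q : ℂ) * pk1 f + ((w₂ K k q : ℂ) - z) * (pk2 f) q := by
    rw [pk2_sub, pk2_smul]
    filter_upwards [h2, Lp.coeFn_sub (pk2 (h f)) (z • pk2 f), Lp.coeFn_smul z (pk2 f)]
      with q a b c
    rw [b, Pi.sub_apply, c, a, Pi.smul_apply, smul_eq_mul]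
    ring
  have h4 : pk1 (h f - z • f) = ((w₁ K k : ℂ) - z) * pk1 f +
      (Real.sqrt 2 : ℂ)⁻¹ * (∫ s, (v₁ s : ℂ) * (pk2 f) s) := by
    rw [pk1_sub, pk1_smul, h1]; ring
  constructor
  · rintro rfl
    exact ⟨h4.symm, h3.mono fun q hq => hq.symm⟩
  · rintro ⟨a, b⟩
    refine gf_ext (h4.trans a) (Lp.ext ?_)
    filter_upwards [h3, b] with q x y
    rw [x, y]

theorem gf_s : (Real.sqrt 2 : ℂ)⁻¹ * (Real.sqrt 2 : ℂ)⁻¹ = 1 / 2 := by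
  rw [← mul_inv, ← Complex.ofReal_mul, Real.mul_self_sqrt (by norm_num)]; norm_num

theorem gf_solve {d : ℕ} {v₁ : Td d → ℝ} {w₁ : Td d → Td d → ℝ}
    {w₂ : Td d → Td d → Td d → ℝ} {K k : Td d} {h : Hkk d →L[ℂ] Hkk d}
    (hv : Continuous v₁) (hw : Continuous (w₂ K k))
    (hh : IsGenFriedrichs v₁ w₁ w₂ K k h) (z : ℂ) (hz : ∀ q, (w₂ K k q : ℂ) - z ≠ 0)
    (f g : Hkk d) :
    (h - z • (1 : Hkk d →L[ℂ] Hkk d)) f = g ↔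
      Delta v₁ w₁ w₂ K k z * pk1 f = pk1 g -
        (Real.sqrt 2 : ℂ)⁻¹ * (∫ s, (v₁ s : ℂ) * ((w₂ K k s : ℂ) - z)⁻¹ * (pk2 g) s) ∧
      ∀ᵐ q, (pk2 f) q = ((w₂ K k q : ℂ) - z)⁻¹ * pk2 g q -
        (Real.sqrt 2 : ℂ)⁻¹ * (v₁ q : ℂ) * ((w₂ K k q : ℂ) - z)⁻¹ * pk1 f := by
  rw [gf_apply hh]
  have hv' : Continuous fun q => (v₁ q : ℂ) := by fun_prop
  have hr : Continuous fun q => ((w₂ K k q : ℂ) - z)⁻¹ :=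
    Continuous.inv₀ (by fun_prop) hz
  have e : (∀ᵐ q, (Real.sqrt 2 : ℂ)⁻¹ * (v₁ q : ℂ) * pk1 f + ((w₂ K k q : ℂ) - z) * (pk2 f) q
        = pk2 g q) ↔ ∀ᵐ q, (pk2 f) q = ((w₂ K k q : ℂ) - z)⁻¹ * pk2 g q -
        (Real.sqrt 2 : ℂ)⁻¹ * (v₁ q : ℂ) * ((w₂ K k q : ℂ) - z)⁻¹ * pk1 f := by
    refine eventually_congr (Eventually.of_forall fun q => ?_)
    have := hz q
    generalize (w₂ K k q : ℂ) - z = y at *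
    constructor
    · intro a
      rw [← a]
      field_simp
      ring
    · intro a
      rw [a]
      field_simp
      ring
  rw [e]
  refine and_congr_left fun hf => ?_
  have e2 : ∫ s, (v₁ s : ℂ) * (pk2 f) s =
      (∫ s, (v₁ s : ℂ) * ((w₂ K k s : ℂ) - z)⁻¹ * (pk2 g) s) -
      (Real.sqrt 2 : ℂ)⁻¹ * pk1 f * ∫ t, (v₁ t : ℂ) ^ 2 / ((w₂ K k t : ℂ) - z) := by
    rw [← integral_const_mul, ← integral_sub]
    · refine integral_congr_ae (hf.mono fun q hq => ?_)
      simp only [hq]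
      ring
    · exact gf_int (gf_mul (hv'.mul hr) (Lp.memLp _))
    · refine gf_int (gf_memLp ?_)
      simp only [div_eq_mul_inv]
      exact continuous_const.mul ((hv'.pow 2).mul hr)
  rw [e2, Delta]
  have := gf_s
  constructor
  · intro a
    rw [← a, ← this]
    ring
  · intro a
    rw [← this] at a
    linear_combination a

theorem gf_exists {d : ℕ} {v₁ : Td d → ℝ}
    {w₂ : Td d → Td d → Td d → ℝ} {K k : Td d}
    (hv : Continuous v₁) (hw : Continuous (w₂ K k))
    (z : ℂ) (hz : ∀ q, (w₂ K k q : ℂ) - z ≠ 0) (a : ℂ) (g : L2 d) :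
    ∃ f : Hkk d, pk1 f = a ∧ ∀ᵐ q, (pk2 f) q = ((w₂ K k q : ℂ) - z)⁻¹ * g q -
        (Real.sqrt 2 : ℂ)⁻¹ * (v₁ q : ℂ) * ((w₂ K k q : ℂ) - z)⁻¹ * pk1 f := by
  have hv' : Continuous fun q => (v₁ q : ℂ) := by fun_prop
  have hr : Continuous fun q => ((w₂ K k q : ℂ) - z)⁻¹ :=
    Continuous.inv₀ (by fun_prop) hz
  have m : MemLp (fun q => ((w₂ K k q : ℂ) - z)⁻¹ * g q -
        (Real.sqrt 2 : ℂ)⁻¹ * (v₁ q : ℂ) * ((w₂ K k q : ℂ) - z)⁻¹ * a) 2 volume := by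
    refine MemLp.sub (gf_mul hr (Lp.memLp _)) (gf_memLp ?_)
    fun_prop
  exact ⟨gfMk a (m.toLp _), rfl, m.coeFn_toLp⟩

theorem gf_eigen {d : ℕ} {v₁ : Td d → ℝ} {w₁ : Td d → Td d → ℝ}
    {w₂ : Td d → Td d → Td d → ℝ} {K k : Td d} {h : Hkk d →L[ℂ] Hkk d}
    (hv : Continuous v₁) (hw : Continuous (w₂ K k))
    (hh : IsGenFriedrichs v₁ w₁ w₂ K k h) (z : ℂ) (hz : ∀ q, (w₂ K k q : ℂ) - z ≠ 0)
    (f : Hkk d) (hf : (h - z • (1 : Hkk d →L[ℂ] Hkk d)) f = 0) :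
    Delta v₁ w₁ w₂ K k z * pk1 f = 0 ∧ (pk1 f = 0 → f = 0) := by
  obtain ⟨h1, h2⟩ := (gf_solve hv hw hh z hz f 0).1 hf
  have p0 : pk1 (0 : Hkk d) = 0 := rfl
  have q0 : pk2 (0 : Hkk d) = 0 := rfl
  have z0 := Lp.coeFn_zero ℂ 2 (volume : Measure (Td d))
  constructor
  · rw [h1, p0, q0]
    have : ∫ s, (v₁ s : ℂ) * ((w₂ K k s : ℂ) - z)⁻¹ * (0 : L2 d) s = 0 := by
      rw [integral_eq_zero_of_ae]
      filter_upwards [z0] with q hq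
      rw [hq]; simp
    rw [this]; simp
  · intro hp
    refine gf_ext hp (Lp.ext ?_)
    rw [q0] at h2 ⊢
    filter_upwards [h2, z0] with q a b
    rw [a, hp, b]; simp

theorem gf_isUnit {d : ℕ} {v₁ : Td d → ℝ} {w₁ : Td d → Td d → ℝ}
    {w₂ : Td d → Td d → Td d → ℝ} {K k : Td d} {h : Hkk d →L[ℂ] Hkk d}
    (hv : Continuous v₁) (hw : Continuous (w₂ K k))
    (hh : IsGenFriedrichs v₁ w₁ w₂ K k h) (z : ℂ) (hz : ∀ q, (w₂ K k q : ℂ) - z ≠ 0)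
    (hD : Delta v₁ w₁ w₂ K k z ≠ 0) : IsUnit (h - z • (1 : Hkk d →L[ℂ] Hkk d)) := by
  rw [ContinuousLinearMap.isUnit_iff_bijective]
  constructor
  · rw [injective_iff_map_eq_zero]
    intro f hf
    obtain ⟨a, b⟩ := gf_eigen hv hw hh z hz f hf
    exact b ((mul_eq_zero.1 a).resolve_left hD)
  · intro g
    obtain ⟨f, h1, h2⟩ := gf_exists hv hw z hz ((Delta v₁ w₁ w₂ K k z)⁻¹ * (pk1 g -
        (Real.sqrt 2 : ℂ)⁻¹ * (∫ s, (v₁ s : ℂ) * ((w₂ K k s : ℂ) - z)⁻¹ * (pk2 g) s))) (pk2 g)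
    refine ⟨f, (gf_solve hv hw hh z hz f g).2 ⟨?_, h2⟩⟩
    rw [h1, mul_inv_cancel_left₀ hD]

theorem gf_spec {d : ℕ} (h : Hkk d →L[ℂ] Hkk d) (z : ℂ) :
    z ∈ spectrum ℂ h ↔ ¬ IsUnit (h - z • (1 : Hkk d →L[ℂ] Hkk d)) := by
  rw [spectrum.mem_iff, ← IsUnit.neg_iff, neg_sub, Algebra.algebraMap_eq_smul_one]

/-- Two zeros of the determinant lying on the same side coincide. -/
theorem gf_uniq {d : ℕ} {v₁ : Td d → ℝ} {w₁ : Td d → Td d → ℝ}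
    {w₂ : Td d → Td d → Td d → ℝ} {K k : Td d}
    (hv : Continuous v₁) (hw : Continuous (w₂ K k)) (z y : ℂ)
    (hz : ∀ q, (w₂ K k q : ℂ) - z ≠ 0) (hy : ∀ q, (w₂ K k q : ℂ) - y ≠ 0)
    (Dz : Delta v₁ w₁ w₂ K k z = 0) (Dy : Delta v₁ w₁ w₂ K k y = 0)
    (hp : ∀ q, 0 ≤ (((w₂ K k q : ℂ) - z) * ((w₂ K k q : ℂ) - y)).re) : z = y := by
  have hv' : Continuous fun q => (v₁ q : ℂ) := by fun_prop
  have hrz : Continuous fun q => ((w₂ K k q : ℂ) - z)⁻¹ := Continuous.inv₀ (by fun_prop) hz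
  have hry : Continuous fun q => ((w₂ K k q : ℂ) - y)⁻¹ := Continuous.inv₀ (by fun_prop) hy
  let F : Td d → ℂ := fun t => (v₁ t : ℂ) ^ 2 * (((w₂ K k t : ℂ) - z)⁻¹ * ((w₂ K k t : ℂ) - y)⁻¹)
  have hF : Integrable F := gf_int (gf_memLp ((hv'.pow 2).mul (hrz.mul hry)))
  have e : (∫ t, (v₁ t : ℂ) ^ 2 / ((w₂ K k t : ℂ) - z)) -
      (∫ t, (v₁ t : ℂ) ^ 2 / ((w₂ K k t : ℂ) - y)) = (z - y) * ∫ t, F t := by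
    rw [← integral_const_mul, ← integral_sub]
    · refine integral_congr_ae (Eventually.of_forall fun q => ?_)
      have := hz q
      have := hy q
      simp only [F]
      field_simp
      ring
    · simp only [div_eq_mul_inv]
      exact gf_int (gf_memLp ((hv'.pow 2).mul hrz))
    · simp only [div_eq_mul_inv]
      exact gf_int (gf_memLp ((hv'.pow 2).mul hry))
  have hre : 0 ≤ (∫ t, F t).re := by
    have : (∫ t, F t).re = ∫ t, (F t).re := (integral_re hF).symm
    rw [this]
    refine integral_nonneg fun t => ?_
    simp only [F, Pi.zero_apply]
    rw [← mul_inv, ← Complex.ofReal_pow, Complex.re_ofReal_mul, Complex.inv_re]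
    exact mul_nonneg (sq_nonneg _) (div_nonneg (hp t) (Complex.normSq_nonneg _))
  have key : (z - y) * (1 + (1 / 2) * ∫ t, F t) = 0 := by
    unfold Delta at Dz Dy
    linear_combination Dy - Dz - (1 / 2) * e
  rcases mul_eq_zero.1 key with h0 | h0
  · exact sub_eq_zero.1 h0
  · have := congrArg Complex.re h0
    have e3 : (1 / 2 : ℂ) = ((1 / 2 : ℝ) : ℂ) := by norm_num
    rw [e3, Complex.add_re, Complex.re_ofReal_mul] at this
    simp at this
    linarith

theorem gf_conj {d : ℕ} {v₁ : Td d → ℝ} {w₁ : Td d → Td d → ℝ}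
    {w₂ : Td d → Td d → Td d → ℝ} {K k : Td d} (z : ℂ) :
    Delta v₁ w₁ w₂ K k (starRingEnd ℂ z) = starRingEnd ℂ (Delta v₁ w₁ w₂ K k z) := by
  unfold Delta
  simp only [map_sub, map_mul, ← integral_conj, map_div₀, map_pow, Complex.conj_ofReal, map_one,
    map_ofNat]

theorem gf_real {d : ℕ} {v₁ : Td d → ℝ} {w₁ : Td d → Td d → ℝ}
    {w₂ : Td d → Td d → Td d → ℝ} {K k : Td d}
    (hv : Continuous v₁) (hw : Continuous (w₂ K k)) (z : ℂ)
    (hz : ∀ q, (w₂ K k q : ℂ) - z ≠ 0)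
    (Dz : Delta v₁ w₁ w₂ K k z = 0) : ((z.re : ℝ) : ℂ) = z := by
  have hc : ∀ q, (w₂ K k q : ℂ) - starRingEnd ℂ z = starRingEnd ℂ ((w₂ K k q : ℂ) - z) := by
    intro q; simp
  have := gf_uniq hv hw z (starRingEnd ℂ z) hz
    (fun q => by rw [hc]; exact (map_ne_zero _).2 (hz q)) Dz (by rw [gf_conj, Dz, map_zero])
    (fun q => by rw [hc, Complex.mul_conj, Complex.ofReal_re]; exact Complex.normSq_nonneg _)
  exact (Complex.conj_eq_iff_re.1 this.symm)

theorem gf_band {d : ℕ} {w₂ : Td d → Td d → Td d → ℝ} {K k : Td d} (hw : Continuous (w₂ K k)) :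
    range (w₂ K k) = Icc (Emin w₂ K k) (Emax w₂ K k) :=
  eq_Icc_of_connected_compact (isConnected_range hw) (isCompact_range hw)

theorem gf_nontrivial {d : ℕ} (hd : 1 ≤ d) : Nontrivial (Td d) := by
  have : Nontrivial (AddCircle (2 * Real.pi)) := by
    refine ⟨⟨((Real.pi : ℝ) : AddCircle (2 * Real.pi)), 0, ?_⟩⟩
    rw [Ne, AddCircle.coe_eq_zero_iff]
    rintro ⟨n, hn⟩
    rw [zsmul_eq_mul] at hn
    have h1 : (2 * (n : ℝ)) = 1 := by
      have := Real.pi_pos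
      have h2 : Real.pi * (2 * (n : ℝ) - 1) = 0 := by linear_combination hn
      rcases mul_eq_zero.1 h2 with h3 | h3 <;> linarith
    have h2 : 2 * n = 1 := by exact_mod_cast h1
    omega
  have : Nonempty (Fin d) := ⟨⟨0, hd⟩⟩
  infer_instance

/-- The functions in `L²` supported in `U`. -/
def gfSupp {d : ℕ} (U : Set (Td d)) : Submodule ℂ (L2 d) where
  carrier := {f | ∀ᵐ q, q ∉ U → f q = 0}
  zero_mem' := by
    filter_upwards [Lp.coeFn_zero ℂ 2 (volume : Measure (Td d))] with q hq _
    rw [hq]; rfl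
  add_mem' := by
    intro f g hf hg
    filter_upwards [hf, hg, Lp.coeFn_add f g] with q a b c hq
    rw [c, Pi.add_apply, a hq, b hq, add_zero]
  smul_mem' := by
    intro c f hf
    filter_upwards [hf, Lp.coeFn_smul c f] with q a b hq
    rw [b, Pi.smul_apply, a hq, smul_zero]

theorem gf_supp_inf {d : ℕ} (hd : 1 ≤ d) {U : Set (Td d)} (hU : IsOpen U) (hne : U.Nonempty) :
    ¬ (gfSupp U).FG := by
  have := gf_nontrivial hd
  obtain ⟨x, hx⟩ := hne
  have hinf : U.Infinite := infinite_of_mem_nhds x (hU.mem_nhds hx)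
  have : Infinite U := hinf.to_subtype
  obtain ⟨V, hV1, hV2, hV3⟩ := exists_seq_infinite_isOpen_pairwise_disjoint U
  let W : ℕ → Set (Td d) := fun n => Subtype.val '' V n
  have hWo : ∀ n, IsOpen (W n) := fun n => hU.isOpenMap_subtype_val _ (hV2 n)
  have hWne : ∀ n, (W n).Nonempty := fun n => (hV1 n).nonempty.image _
  have hWU : ∀ n, W n ⊆ U := fun n => by rintro _ ⟨y, _, rfl⟩; exact y.2
  have hWd : ∀ i j, i ≠ j → Disjoint (W i) (W j) := fun i j hij =>
    (Set.disjoint_image_iff Subtype.val_injective).2 (hV3 hij)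
  let e : ℕ → L2 d := fun n =>
    indicatorConstLp 2 (hWo n).measurableSet (measure_ne_top volume (W n)) (1 : ℂ)
  have he0 : ∀ n, e n ≠ 0 := by
    intro n h0
    have hpos := (hWo n).measure_pos volume (hWne n)
    have := norm_indicatorConstLp' (p := 2) (hs := (hWo n).measurableSet)
      (hμs := measure_ne_top volume (W n)) (c := (1 : ℂ)) (by norm_num) hpos.ne'
    have h0' : ‖e n‖ = 0 := by rw [h0, norm_zero]
    have h1 : ‖e n‖ = _ := this
    rw [h0'] at h1
    have : 0 < (volume : Measure (Td d)).real (W n) :=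
      ENNReal.toReal_pos hpos.ne' (measure_ne_top _ _)
    have := Real.rpow_pos_of_pos this (1 / (2 : ENNReal).toReal)
    rw [norm_one, one_mul] at h1
    linarith
  have heo : ∀ i j, i ≠ j → inner ℂ (e i) (e j) = 0 := by
    intro i j hij
    simp only [e]
    rw [L2.inner_indicatorConstLp_one]
    apply integral_eq_zero_of_ae
    refine (ae_restrict_iff' (hWo i).measurableSet).2 ?_
    filter_upwards [indicatorConstLp_coeFn_notMem (p := 2) (hs := (hWo j).measurableSet)
      (hμs := measure_ne_top volume (W j)) (c := (1 : ℂ))] with q hq hi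
    exact hq fun hj => Set.disjoint_left.1 (hWd i j hij) hi hj
  have hli : LinearIndependent ℂ e := linearIndependent_of_ne_zero_of_inner_eq_zero he0 heo
  intro hfg
  have hmem : ∀ n, e n ∈ gfSupp U := by
    intro n
    filter_upwards [indicatorConstLp_coeFn_notMem (p := 2) (hs := (hWo n).measurableSet)
      (hμs := measure_ne_top volume (W n)) (c := (1 : ℂ))] with q hq hi
    exact hq fun hj => hi (hWU n hj)
  have hli2 : LinearIndependent ℂ (fun n => (⟨e n, hmem n⟩ : gfSupp U)) :=
    LinearIndependent.of_comp (gfSupp U).subtype hli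
  have : FiniteDimensional ℂ (gfSupp U) := Module.Finite.iff_fg.2 hfg
  have := hli2.finite
  exact not_finite ℕ

/-- `f₁ ↦ (h (0, f₁))₀` as a linear map. -/
def gfPhi {d : ℕ} (h : Hkk d →L[ℂ] Hkk d) : L2 d →ₗ[ℂ] ℂ where
  toFun f := pk1 (h (gfMk 0 f))
  map_add' f g := by
    have : gfMk 0 (f + g) = gfMk 0 f + gfMk 0 g :=
      gf_ext (show (0 : ℂ) = 0 + 0 by simp) rfl
    rw [this, map_add]; rfl
  map_smul' c f := by
    have : gfMk 0 (c • f) = c • gfMk 0 f :=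
      gf_ext (show (0 : ℂ) = c * 0 by simp) rfl
    rw [this, map_smul]; rfl

theorem gf_supp_inf' {d : ℕ} (hd : 1 ≤ d) {U : Set (Td d)} (hU : IsOpen U) (hne : U.Nonempty)
    (h : Hkk d →L[ℂ] Hkk d) : ¬ (gfSupp U ⊓ LinearMap.ker (gfPhi h)).FG := fun hfg =>
  gf_supp_inf hd hU hne
    (Submodule.fg_of_fg_map_of_fg_inf_ker (gfPhi h) (IsNoetherian.noetherian _) hfg)

theorem gf_norm {d : ℕ} (f : L2 d) : ‖gfMk 0 f‖ = ‖f‖ := by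
  simp [gfMk]

theorem gf_range_spec {d : ℕ} (hd : 1 ≤ d) {v₁ : Td d → ℝ} {w₁ : Td d → Td d → ℝ}
    {w₂ : Td d → Td d → Td d → ℝ} {K k : Td d} {h : Hkk d →L[ℂ] Hkk d}
    (hw : Continuous (w₂ K k))
    (hh : IsGenFriedrichs v₁ w₁ w₂ K k h) (q₀ : Td d) :
    ((w₂ K k q₀ : ℝ) : ℂ) ∈ spectrum ℂ h := by
  rw [gf_spec]
  intro hu
  obtain ⟨B, hB⟩ := hu.exists_left_inv
  set A := h - ((w₂ K k q₀ : ℝ) : ℂ) • (1 : Hkk d →L[ℂ] Hkk d) with hA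
  let ε : ℝ := (‖B‖ + 1)⁻¹
  have hε : 0 < ε := by positivity
  let U : Set (Td d) := {q | ‖((w₂ K k q : ℂ) - (w₂ K k q₀ : ℂ))‖ < ε}
  have hU : IsOpen U := isOpen_lt (by fun_prop) continuous_const
  have hne : U.Nonempty := ⟨q₀, by simpa [U] using hε⟩
  have hbot : gfSupp U ⊓ LinearMap.ker (gfPhi h) ≠ ⊥ := fun h0 =>
    gf_supp_inf' hd hU hne h (h0 ▸ Submodule.fg_bot)
  obtain ⟨f, ⟨hf1, hf2⟩, hf0⟩ := Submodule.exists_mem_ne_zero_of_ne_bot hbot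
  obtain ⟨-, a2⟩ := (gf_apply hh ((w₂ K k q₀ : ℝ) : ℂ) (gfMk 0 f) (A (gfMk 0 f))).1 rfl
  have a1 : pk1 (A (gfMk 0 f)) = 0 := by
    have : A (gfMk 0 f) = h (gfMk 0 f) - ((w₂ K k q₀ : ℝ) : ℂ) • gfMk 0 f := by simp [hA]
    rw [this, pk1_sub, pk1_smul, pk1_gfMk, mul_zero, sub_zero]
    exact hf2
  have e : A (gfMk 0 f) = gfMk 0 (pk2 (A (gfMk 0 f))) := gf_ext a1 rfl
  have hle : ‖A (gfMk 0 f)‖ ≤ ε * ‖f‖ := by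
    rw [e, gf_norm]
    apply Lp.norm_le_mul_norm_of_ae_le_mul
    filter_upwards [a2, hf1] with q b c
    rw [← b, pk1_gfMk, mul_zero, zero_add, pk2_gfMk, norm_mul]
    by_cases hq : q ∈ U
    · exact mul_le_mul_of_nonneg_right (le_of_lt hq) (norm_nonneg _)
    · rw [c hq]; simp
  have hfB : B (A (gfMk 0 f)) = gfMk 0 f := by
    have := congrArg (fun T : Hkk d →L[ℂ] Hkk d => T (gfMk 0 f)) hB
    simpa using this
  have h1 := B.le_opNorm (A (gfMk 0 f))
  rw [hfB, gf_norm] at h1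
  have hpos : 0 < ‖f‖ := norm_pos_iff.2 hf0
  have h2 : ‖B‖ * ‖A (gfMk 0 f)‖ ≤ ‖B‖ * (ε * ‖f‖) :=
    mul_le_mul_of_nonneg_left hle (norm_nonneg _)
  have h3 : ‖B‖ * ε < 1 := by
    have : ‖B‖ * ε = ‖B‖ / (‖B‖ + 1) := rfl
    rw [this, div_lt_one (by positivity)]
    linarith
  have h4 : ‖B‖ * (ε * ‖f‖) < ‖f‖ := by
    rw [← mul_assoc]
    exact mul_lt_of_lt_one_left hpos h3
  linarith

theorem gf_const {d : ℕ} (hd : 1 ≤ d) {v₁ : Td d → ℝ} {w₁ : Td d → Td d → ℝ}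
    {w₂ : Td d → Td d → Td d → ℝ} {K k : Td d} {h : Hkk d →L[ℂ] Hkk d}
    (hh : IsGenFriedrichs v₁ w₁ w₂ K k h) (z : ℂ) (hz : ∀ q, (w₂ K k q : ℂ) = z) :
    ¬ FiniteDimensional ℂ (LinearMap.ker (h - z • (1 : Hkk d →L[ℂ] Hkk d)).toLinearMap) := by
  intro hfin
  apply gf_supp_inf' hd isOpen_univ univ_nonempty h
  let P : Hkk d →ₗ[ℂ] L2 d :=
    { toFun := pk2, map_add' := fun _ _ => rfl, map_smul' := fun _ _ => rfl }
  have h1 : ((LinearMap.ker (h - z • (1 : Hkk d →L[ℂ] Hkk d)).toLinearMap).map P).FG :=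
    (Module.Finite.iff_fg.1 hfin).map P
  refine Module.Finite.iff_fg.1 ?_
  have := Module.Finite.iff_fg.2 h1
  refine Submodule.finiteDimensional_of_le (S₂ :=
    (LinearMap.ker (h - z • (1 : Hkk d →L[ℂ] Hkk d)).toLinearMap).map P) ?_
  rintro f ⟨-, hf⟩
  refine ⟨gfMk 0 f, ?_, rfl⟩
  have hf' : pk1 (h (gfMk 0 f)) = 0 := hf
  rw [(hh _).1, pk1_gfMk, mul_zero, zero_add] at hf'
  change (h - z • (1 : Hkk d →L[ℂ] Hkk d)) (gfMk 0 f) = 0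
  rw [gf_apply hh]
  constructor
  · rw [pk1_gfMk, mul_zero, zero_add, hf']; rfl
  · have q0 : pk2 (0 : Hkk d) = 0 := rfl
    filter_upwards [Lp.coeFn_zero ℂ 2 (volume : Measure (Td d))] with q hq
    rw [q0, hq, hz, pk1_gfMk]; simp

/-- For any `K, k ∈ T^d`, the discrete spectrum of `h(K,k)` equals the zero
set of the Fredholm determinant outside the essential spectrum. -/
theorem discSpec_genFriedrichs
    (d : ℕ) (hd : 1 ≤ d)
    (w₀ v₀ v₁ : Td d → ℝ) (w₁ : Td d → Td d → ℝ) (w₂ : Td d → Td d → Td d → ℝ)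
    (hw₀ : Continuous w₀) (hv₀ : Continuous v₀) (hv₁ : Continuous v₁)
    (hw₁ : Continuous fun x : Td d × Td d => w₁ x.1 x.2)
    (hw₂ : Continuous fun x : Td d × Td d × Td d => w₂ x.1 x.2.1 x.2.2)
    (hsym : ∀ K p q : Td d, w₂ K p q = w₂ K q p)
    (K k : Td d) (h : Hkk d →L[ℂ] Hkk d)
    (hh : IsGenFriedrichs v₁ w₁ w₂ K k h) :
    discSpec h = {z : ℂ | z ∉ bandKk w₂ K k ∧ Delta v₁ w₁ w₂ K k z = 0} := by
  have hw : Continuous (w₂ K k) := hw₂.comp (by fun_prop : Continuous fun q : Td d => (K, k, q))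
  have hband : bandKk w₂ K k = Complex.ofReal '' range (w₂ K k) := by
    rw [bandKk, gf_band hw]
  have hnb : ∀ z : ℂ, z ∉ bandKk w₂ K k ↔ ∀ q, (w₂ K k q : ℂ) - z ≠ 0 := by
    intro z
    rw [hband]
    simp [sub_eq_zero]
  have hker : ∀ (z : ℂ) (f : Hkk d), h f = z • f ↔
      (h - z • (1 : Hkk d →L[ℂ] Hkk d)) f = 0 := by
    intro z f
    rw [← sub_eq_zero]
    simp
  ext z
  constructor
  · rintro ⟨⟨f, hf0, hf⟩, hiso, hfin⟩
    have hz : z ∉ bandKk w₂ K k := by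
      rw [hband]
      rintro ⟨_, ⟨q₀, rfl⟩, rfl⟩
      by_cases hc : ∀ q, w₂ K k q = w₂ K k q₀
      · exact gf_const hd hh _ (fun q => by rw [hc q]) hfin
      · push Not at hc
        obtain ⟨q₁, hq₁⟩ := hc
        apply hiso
        have hnt : (range (w₂ K k)).Nontrivial :=
          ⟨_, ⟨q₁, rfl⟩, _, ⟨q₀, rfl⟩, hq₁⟩
        have hacc : w₂ K k q₀ ∈ closure (range (w₂ K k) \ {w₂ K k q₀}) :=
          mem_closure_iff.2 (by
            intro o ho hqo
            obtain ⟨y, ⟨hy1, hy2⟩, hy3⟩ := accPt_iff_nhds.1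
              ((isPreconnected_range hw).preperfect_of_nontrivial hnt _ ⟨q₀, rfl⟩)
              o (ho.mem_nhds hqo)
            exact ⟨y, hy1, hy2, hy3⟩)
        have := image_closure_subset_closure_image Complex.continuous_ofReal
          (mem_image_of_mem Complex.ofReal hacc)
        refine closure_mono ?_ this
        rintro _ ⟨_, ⟨⟨q, rfl⟩, hq⟩, rfl⟩
        exact ⟨gf_range_spec hd hw hh q, fun hx => hq (Complex.ofReal_injective hx)⟩
    refine ⟨hz, ?_⟩
    obtain ⟨a, b⟩ := gf_eigen hv₁ hw hh z ((hnb z).1 hz) f ((hker z f).1 hf)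
    exact (mul_eq_zero.1 a).resolve_right fun h0 => hf0 (b h0)
  · rintro ⟨hz, hD⟩
    have hz' := (hnb z).1 hz
    refine ⟨?_, ?_, ?_⟩
    · obtain ⟨f, h1, h2⟩ := gf_exists hv₁ hw z hz' 1 0
      refine ⟨f, ?_, (hker z f).2 ((gf_solve hv₁ hw hh z hz' f 0).2 ⟨?_, h2⟩)⟩
      · rintro rfl
        exact zero_ne_one h1
      · have z0 := Lp.coeFn_zero ℂ 2 (volume : Measure (Td d))
        have q0 : pk2 (0 : Hkk d) = 0 := rfl
        have p0 : pk1 (0 : Hkk d) = 0 := rfl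
        have : ∫ s, (v₁ s : ℂ) * ((w₂ K k s : ℂ) - z)⁻¹ * (0 : L2 d) s = 0 := by
          rw [integral_eq_zero_of_ae]
          filter_upwards [z0] with q hq
          rw [hq]; simp
        rw [hD, q0, this, p0]; simp
    · have hre := gf_real hv₁ hw z hz' hD
      have hmem : ∀ q, w₂ K k q ∈ Icc (Emin w₂ K k) (Emax w₂ K k) := fun q => by
        rw [← gf_band hw]; exact mem_range_self q
      have main : ∀ N : Set ℂ, IsOpen N → z ∈ N → N ⊆ (bandKk w₂ K k)ᶜ →
          (∀ y ∈ N, ∀ q, 0 ≤ (w₂ K k q - z.re) * (w₂ K k q - y.re)) →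
          z ∉ closure (spectrum ℂ h \ {z}) := by
        intro N hN hzN hNb hpos hcl
        obtain ⟨y, hyN, hys, hyz⟩ := mem_closure_iff.1 hcl N hN hzN
        have hy' := (hnb y).1 (hNb hyN)
        rw [gf_spec] at hys
        by_cases hDy : Delta v₁ w₁ w₂ K k y = 0
        · have hrey := gf_real hv₁ hw y hy' hDy
          refine hyz (gf_uniq hv₁ hw z y hz' hy' hD hDy fun q => ?_).symm
          rw [← hre, ← hrey]
          have := hpos y hyN q
          rw [← Complex.ofReal_sub, ← Complex.ofReal_sub, ← Complex.ofReal_mul,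
            Complex.ofReal_re]
          exact this
        · exact hys (gf_isUnit hv₁ hw hh y hy' hDy)
      have hcase : z.re < Emin w₂ K k ∨ Emax w₂ K k < z.re := by
        by_contra! hcon
        exact hz ⟨z.re, hcon, hre⟩
      rcases hcase with hlt | hlt
      · refine main {y | y.re < Emin w₂ K k} (isOpen_lt Complex.continuous_re continuous_const)
          hlt ?_ ?_
        · rintro _ hy ⟨x, hx, rfl⟩
          have hy' : x < Emin w₂ K k := hy
          exact absurd hx.1 (not_le.2 hy')
        · intro y hy q
          have hy' : y.re < Emin w₂ K k := hy
          have := (hmem q).1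
          exact mul_nonneg (by linarith) (by linarith)
      · refine main {y | Emax w₂ K k < y.re} (isOpen_lt continuous_const Complex.continuous_re)
          hlt ?_ ?_
        · rintro _ hy ⟨x, hx, rfl⟩
          have hy' : Emax w₂ K k < x := hy
          exact absurd hx.2 (not_le.2 hy')
        · intro y hy q
          have hy' : Emax w₂ K k < y.re := hy
          have := (hmem q).2
          exact mul_nonneg_of_nonpos_of_nonpos (by linarith) (by linarith)
    · let P : LinearMap.ker (h - z • (1 : Hkk d →L[ℂ] Hkk d)).toLinearMap →ₗ[ℂ] ℂ :=
        { toFun := fun f => pk1 f.1, map_add' := fun _ _ => rfl, map_smul' := fun _ _ => rfl }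
      refine FiniteDimensional.of_injective P ?_
      rw [injective_iff_map_eq_zero]
      rintro ⟨f, hf⟩ hP
      exact Subtype.ext ((gf_eigen hv₁ hw hh z hz' f hf).2 hP)
end
end

section
/- For any fixed K, k ∈ T^d, the operator h(K,k) has at most one eigenvalue in (−∞, E_min(K,k)) and at most one eigenvalue in (E_max(K,k), +∞), and each such eigenvalue is simple (its eigenspace is one-dimensional). -/
open MeasureTheory Complex Filter Topology Set

noncomputable section

variable {d : ℕ}

theorem aux_smul {d : ℕ} {v₁ : Td d → ℝ} {w₁ : Td d → Td d → ℝ}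
    {w₂ : Td d → Td d → Td d → ℝ} {K k : Td d} {h : Hkk d →L[ℂ] Hkk d}
    (hh : IsGenFriedrichs v₁ w₁ w₂ K k h) {z : ℝ} (hz : ∀ q, w₂ K k q ≠ z)
    {f : Hkk d} (hf : h f = (z : ℂ) • f) :
    ((w₁ K k : ℂ) - z) * pk1 f + (Real.sqrt 2 : ℂ)⁻¹ * (∫ s, (v₁ s : ℂ) * (pk2 f) s) = 0 ∧
    (⇑(pk2 f) =ᵐ[volume] fun q =>
      -((Real.sqrt 2 : ℂ)⁻¹ * (v₁ q : ℂ) * pk1 f / ((w₂ K k q : ℂ) - z))) := by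
  obtain ⟨h1, h2⟩ := hh f
  rw [hf] at h1 h2
  have e1 : pk1 ((z : ℂ) • f) = (z : ℂ) * pk1 f := rfl
  have e2 : pk2 ((z : ℂ) • f) = (z : ℂ) • pk2 f := rfl
  rw [e1] at h1
  rw [e2] at h2
  refine ⟨by linear_combination -h1, ?_⟩
  filter_upwards [h2, Lp.coeFn_smul (z : ℂ) (pk2 f)] with q hq hq2
  rw [hq2, Pi.smul_apply, smul_eq_mul] at hq
  have hne : (w₂ K k q : ℂ) - z ≠ 0 := by
    rw [sub_ne_zero]
    exact_mod_cast hz q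
  field_simp at hq ⊢
  linear_combination -hq

theorem aux_zero {d : ℕ} {v₁ : Td d → ℝ} {w₁ : Td d → Td d → ℝ}
    {w₂ : Td d → Td d → Td d → ℝ} {K k : Td d} {h : Hkk d →L[ℂ] Hkk d}
    (hh : IsGenFriedrichs v₁ w₁ w₂ K k h) {z : ℝ} (hz : ∀ q, w₂ K k q ≠ z)
    {f : Hkk d} (hf : h f = (z : ℂ) • f) (h0 : pk1 f = 0) : f = 0 := by
  obtain ⟨-, h2⟩ := aux_smul hh hz hf
  have h3 : pk2 f = 0 := by
    rw [Lp.eq_zero_iff_ae_eq_zero]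
    filter_upwards [h2] with q hq
    rw [hq, h0]
    simp
  apply (WithLp.equiv 2 (ℂ × L2 d)).injective
  exact Prod.ext h0 h3

theorem aux_delta {d : ℕ} {v₁ : Td d → ℝ} {w₁ : Td d → Td d → ℝ}
    {w₂ : Td d → Td d → Td d → ℝ} {K k : Td d} {h : Hkk d →L[ℂ] Hkk d}
    (hh : IsGenFriedrichs v₁ w₁ w₂ K k h) {z : ℝ} (hz : ∀ q, w₂ K k q ≠ z)
    (hf : ∃ f : Hkk d, f ≠ 0 ∧ h f = (z : ℂ) • f) :
    w₁ K k - z = (1 / 2) * ∫ q, v₁ q ^ 2 / (w₂ K k q - z) := by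
  obtain ⟨f, hf0, hf⟩ := hf
  have hp : pk1 f ≠ 0 := fun h0 => hf0 (aux_zero hh hz hf h0)
  obtain ⟨h1, h2⟩ := aux_smul hh hz hf
  have h3 : (∫ s, (v₁ s : ℂ) * (pk2 f) s) =
      -((Real.sqrt 2 : ℂ)⁻¹ * pk1 f) * ((∫ q, v₁ q ^ 2 / (w₂ K k q - z) : ℝ) : ℂ) := by
    rw [← integral_complex_ofReal, ← integral_const_mul]
    apply integral_congr_ae
    filter_upwards [h2] with q hq
    rw [hq]
    push_cast
    ring
  rw [h3] at h1
  have hs : (Real.sqrt 2 : ℂ)⁻¹ * (Real.sqrt 2 : ℂ)⁻¹ = 1 / 2 := by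
    rw [← mul_inv, ← Complex.ofReal_mul, Real.mul_self_sqrt (by norm_num)]
    norm_num
  have h4 : ((w₁ K k : ℂ) - z) = (1 / 2) * ((∫ q, v₁ q ^ 2 / (w₂ K k q - z) : ℝ) : ℂ) := by
    apply mul_right_cancel₀ hp
    linear_combination h1 + pk1 f * ((∫ q, v₁ q ^ 2 / (w₂ K k q - z) : ℝ) : ℂ) * hs
  have h5 : ((w₁ K k - z : ℝ) : ℂ) =
      (((1 / 2) * ∫ q, v₁ q ^ 2 / (w₂ K k q - z) : ℝ) : ℂ) := by
    rw [Complex.ofReal_sub, h4]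
    push_cast
    rfl
  exact_mod_cast h5

theorem aux_le {d : ℕ} {v w : Td d → ℝ} (hv : Continuous v) (hw : Continuous w) {z₁ z₂ c : ℝ}
    (h1 : ∀ q, w q ≠ z₁) (h2 : ∀ q, w q ≠ z₂) (hs : ∀ q, 0 < (w q - z₁) * (w q - z₂))
    (e1 : c - z₁ = (1 / 2) * ∫ q, v q ^ 2 / (w q - z₁))
    (e2 : c - z₂ = (1 / 2) * ∫ q, v q ^ 2 / (w q - z₂)) : z₂ ≤ z₁ := by
  by_contra! hlt
  have hint : ∀ z : ℝ, (∀ q, w q ≠ z) → Integrable (fun q => v q ^ 2 / (w q - z)) volume := by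
    intro z hz
    have hc : Continuous (fun q => v q ^ 2 / (w q - z)) :=
      (hv.pow 2).div (hw.sub continuous_const) (fun q => sub_ne_zero.2 (hz q))
    exact hc.integrable_of_hasCompactSupport (HasCompactSupport.of_compactSpace _)
  have hm : ∫ q, v q ^ 2 / (w q - z₁) ≤ ∫ q, v q ^ 2 / (w q - z₂) := by
    apply integral_mono (hint z₁ h1) (hint z₂ h2)
    intro q
    have n1 := sub_ne_zero.2 (h1 q)
    have n2 := sub_ne_zero.2 (h2 q)
    have : v q ^ 2 / (w q - z₂) - v q ^ 2 / (w q - z₁)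
        = v q ^ 2 * (z₂ - z₁) / ((w q - z₁) * (w q - z₂)) := by
      field_simp
      ring
    have h3 : 0 ≤ v q ^ 2 * (z₂ - z₁) / ((w q - z₁) * (w q - z₂)) :=
      div_nonneg (mul_nonneg (sq_nonneg _) (by linarith)) (hs q).le
    show v q ^ 2 / (w q - z₁) ≤ v q ^ 2 / (w q - z₂)
    linarith
  linarith

/-- For fixed `K, k ∈ T^d`, the operator `h(K,k)` has at most one eigenvalue
in `(-∞, E_min(K,k))` and at most one eigenvalue in `(E_max(K,k), +∞)`, and each such
eigenvalue is simple. -/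
theorem at_most_one_simple_eigenvalue
    (d : ℕ) (hd : 1 ≤ d)
    (w₀ v₀ v₁ : Td d → ℝ) (w₁ : Td d → Td d → ℝ) (w₂ : Td d → Td d → Td d → ℝ)
    (hw₀ : Continuous w₀) (hv₀ : Continuous v₀) (hv₁ : Continuous v₁)
    (hw₁ : Continuous fun x : Td d × Td d => w₁ x.1 x.2)
    (hw₂ : Continuous fun x : Td d × Td d × Td d => w₂ x.1 x.2.1 x.2.2)
    (hsym : ∀ K p q : Td d, w₂ K p q = w₂ K q p)
    (K k : Td d) (h : Hkk d →L[ℂ] Hkk d)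
    (hh : IsGenFriedrichs v₁ w₁ w₂ K k h) :
    (∀ z₁ z₂ : ℝ, z₁ < Emin w₂ K k → z₂ < Emin w₂ K k →
      (∃ f : Hkk d, f ≠ 0 ∧ h f = (z₁ : ℂ) • f) →
      (∃ f : Hkk d, f ≠ 0 ∧ h f = (z₂ : ℂ) • f) → z₁ = z₂) ∧
    (∀ z₁ z₂ : ℝ, Emax w₂ K k < z₁ → Emax w₂ K k < z₂ →
      (∃ f : Hkk d, f ≠ 0 ∧ h f = (z₁ : ℂ) • f) →
      (∃ f : Hkk d, f ≠ 0 ∧ h f = (z₂ : ℂ) • f) → z₁ = z₂) ∧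
    (∀ z : ℝ, (z < Emin w₂ K k ∨ Emax w₂ K k < z) →
      (∃ f : Hkk d, f ≠ 0 ∧ h f = (z : ℂ) • f) →
      Module.finrank ℂ (LinearMap.ker (h - (z : ℂ) • (1 : Hkk d →L[ℂ] Hkk d)).toLinearMap) = 1) := by
  have hw : Continuous (w₂ K k) :=
    hw₂.comp (continuous_const.prodMk (continuous_const.prodMk continuous_id))
  have hb : IsCompact (Set.range (w₂ K k)) := isCompact_range hw
  have hlo : ∀ z : ℝ, z < Emin w₂ K k → ∀ q, z < w₂ K k q := fun z hz q =>
    lt_of_lt_of_le hz (ciInf_le hb.bddBelow q)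
  have hhi : ∀ z : ℝ, Emax w₂ K k < z → ∀ q, w₂ K k q < z := fun z hz q =>
    lt_of_le_of_lt (le_ciSup hb.bddAbove q) hz
  refine ⟨?_, ?_, ?_⟩
  · intro z₁ z₂ hz1 hz2 hf1 hf2
    have l1 := hlo z₁ hz1
    have l2 := hlo z₂ hz2
    have e1 := aux_delta hh (fun q => (l1 q).ne') hf1
    have e2 := aux_delta hh (fun q => (l2 q).ne') hf2
    apply le_antisymm
    · exact aux_le hv₁ hw (fun q => (l2 q).ne') (fun q => (l1 q).ne')
        (fun q => mul_pos (sub_pos.2 (l2 q)) (sub_pos.2 (l1 q))) e2 e1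
    · exact aux_le hv₁ hw (fun q => (l1 q).ne') (fun q => (l2 q).ne')
        (fun q => mul_pos (sub_pos.2 (l1 q)) (sub_pos.2 (l2 q))) e1 e2
  · intro z₁ z₂ hz1 hz2 hf1 hf2
    have l1 := hhi z₁ hz1
    have l2 := hhi z₂ hz2
    have e1 := aux_delta hh (fun q => (l1 q).ne) hf1
    have e2 := aux_delta hh (fun q => (l2 q).ne) hf2
    apply le_antisymm
    · exact aux_le hv₁ hw (fun q => (l2 q).ne) (fun q => (l1 q).ne)
        (fun q => mul_pos_of_neg_of_neg (sub_neg.2 (l2 q)) (sub_neg.2 (l1 q))) e2 e1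
    · exact aux_le hv₁ hw (fun q => (l1 q).ne) (fun q => (l2 q).ne)
        (fun q => mul_pos_of_neg_of_neg (sub_neg.2 (l1 q)) (sub_neg.2 (l2 q))) e1 e2
  · intro z hz hf
    have hne : ∀ q, w₂ K k q ≠ z := by
      intro q
      rcases hz with hz | hz
      · exact (hlo z hz q).ne'
      · exact (hhi z hz q).ne
    obtain ⟨f, hf0, hf⟩ := hf
    have hmem : ∀ g : Hkk d,
        g ∈ LinearMap.ker (h - (z : ℂ) • (1 : Hkk d →L[ℂ] Hkk d)).toLinearMap ↔
          h g = (z : ℂ) • g := by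
      intro g
      rw [LinearMap.mem_ker]
      exact sub_eq_zero
    have hp : pk1 f ≠ 0 := fun h0 => hf0 (aux_zero hh hne hf h0)
    refine (finrank_eq_one_iff_of_nonzero'
      (⟨f, (hmem f).2 hf⟩ : LinearMap.ker
        (h - (z : ℂ) • (1 : Hkk d →L[ℂ] Hkk d)).toLinearMap) ?_).2 ?_
    · intro h0
      exact hf0 (congrArg Subtype.val h0)
    · rintro ⟨g, hg⟩
      rw [hmem] at hg
      refine ⟨pk1 g / pk1 f, Subtype.ext ?_⟩
      show (pk1 g / pk1 f) • f = g
      rw [← sub_eq_zero]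
      apply aux_zero hh hne
      · rw [map_sub, map_smul, hf, hg, smul_sub, smul_comm]
      · have : pk1 ((pk1 g / pk1 f) • f - g) = (pk1 g / pk1 f) * pk1 f - pk1 g := rfl
        rw [this, div_mul_cancel₀ _ hp, sub_self]
end
end

section
/- For every K ∈ T^d and every z ∈ ℂ \ Σ_K, the operator T_11(K, z) is a Hilbert–Schmidt integral operator on L²(T^d) and the 2×2 block operator matrix T(K, z) is a compact operator on ℂ ⊕ L²(T^d). -/
open MeasureTheory Complex Filter Topology Set

noncomputable section

variable {d : ℕ}

/-- The defining equations of the `2×2` block operator matrix `T(K, z)` acting on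
`ℂ ⊕ L²(T^d)`:
`(T g)₀ = (1 + w₀(K) − z) g₀ + ∫ v₀(t) g₁(t) dt`,
`(T g)₁(p) = −v₀(p) g₀ / Δ_K(p; z) + (v₁(p)/(2Δ_K(p; z))) ∫ v₁(t) g₁(t)/(w₂(K;p,t) − z) dt`. -/
def IsTOp {d : ℕ} (w₀ v₀ v₁ : Td d → ℝ) (w₁ : Td d → Td d → ℝ)
    (w₂ : Td d → Td d → Td d → ℝ) (K : Td d) (z : ℂ) (T : Hkk d →L[ℂ] Hkk d) : Prop :=
  ∀ g : Hkk d,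
    (pk1 (T g) = (1 + (w₀ K : ℂ) - z) * pk1 g + (∫ t, (v₀ t : ℂ) * (pk2 g) t)) ∧
    (⇑(pk2 (T g)) =ᵐ[volume] fun p =>
        -((v₀ p : ℂ) * pk1 g) / Delta v₁ w₁ w₂ K p z +
          (v₁ p : ℂ) / (2 * Delta v₁ w₁ w₂ K p z) *
            (∫ t, (v₁ t : ℂ) * (pk2 g) t / ((w₂ K p t : ℂ) - z)))

theorem bdd_family_compact {H X : Type*} [NormedAddCommGroup H] [NormedSpace ℂ H]
    [TopologicalSpace X] [CompactSpace X] (L : X → (H →L[ℂ] ℂ)) (hL : Continuous L) :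
    IsCompact (closure {f : BoundedContinuousFunction X ℂ | ∃ g : H, ‖g‖ ≤ 1 ∧ ∀ x, f x = L x g}) := by
  obtain ⟨C, hC⟩ := (isCompact_range hL).isBounded.exists_norm_le
  apply BoundedContinuousFunction.arzela_ascoli (Metric.closedBall (0 : ℂ) C)
    (isCompact_closedBall _ _)
  · rintro f x ⟨g, hg, hf⟩
    rw [mem_closedBall_zero_iff, hf]
    have h1 := (L x).le_opNorm g
    have h2 := hC (L x) ⟨x, rfl⟩
    nlinarith [norm_nonneg (L x), norm_nonneg g]
  · intro x₀
    rw [Metric.equicontinuousAt_iff_right]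
    intro ε hε
    have := (Metric.tendsto_nhds.1 (hL.tendsto x₀)) ε hε
    filter_upwards [this] with x hx
    rintro ⟨f, g, hg, hf⟩
    change dist (f x₀) (f x) < ε
    rw [hf, hf, dist_comm, dist_eq_norm, ← sub_apply]
    rw [dist_eq_norm] at hx
    have h1 := (L x - L x₀).le_opNorm g
    nlinarith [norm_nonneg (L x - L x₀), norm_nonneg g]

/-- The continuous linear functional `g ↦ ∫ φ g` on `L²`. -/
def pairL {d : ℕ} (φ : C(Td d, ℂ)) : L2 d →L[ℂ] ℂ :=
  innerSL ℂ (ContinuousMap.toLp (E := ℂ) 2 (volume : Measure (Td d)) ℂ (star φ))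

theorem pairL_continuous {d : ℕ} : Continuous (pairL (d := d)) := by
  unfold pairL
  exact (innerSL ℂ).continuous.comp ((ContinuousLinearMap.continuous _).comp continuous_star)

theorem pairL_apply {d : ℕ} (φ : C(Td d, ℂ)) (g : L2 d) :
    pairL φ g = ∫ t, φ t * g t := by
  unfold pairL
  rw [innerSL_apply_apply, L2.inner_def]
  apply integral_congr_ae
  filter_upwards [ContinuousMap.coeFn_toLp (p := 2) (𝕜 := ℂ) (volume : Measure (Td d)) (star φ)] with t ht
  rw [ht]
  simp [mul_comm]

theorem ne_of_notin {d : ℕ} (w₂ : Td d → Td d → Td d → ℝ)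
    (hw₂ : Continuous fun x : Td d × Td d × Td d => w₂ x.1 x.2.1 x.2.2)
    (K : Td d) (z : ℂ) (hz : z ∉ bigBand w₂ K) (p q : Td d) : (w₂ K p q : ℂ) - z ≠ 0 := by
  intro h
  have hc : Continuous fun x : Td d × Td d => w₂ K x.1 x.2 :=
    hw₂.comp (continuous_const.prodMk continuous_id)
  have hb := isCompact_range hc
  exact hz ⟨w₂ K p q, ⟨ciInf_le hb.bddBelow (p, q), le_ciSup hb.bddAbove (p, q)⟩,
    sub_eq_zero.1 h⟩

theorem band_sub {d : ℕ} (w₂ : Td d → Td d → Td d → ℝ)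
    (hw₂ : Continuous fun x : Td d × Td d × Td d => w₂ x.1 x.2.1 x.2.2)
    (K k : Td d) : bandKk w₂ K k ⊆ bigBand w₂ K := by
  have hc : Continuous fun x : Td d × Td d => w₂ K x.1 x.2 :=
    hw₂.comp (continuous_const.prodMk continuous_id)
  have hb := isCompact_range hc
  apply Set.image_mono
  apply Set.Icc_subset_Icc
  · exact le_ciInf fun q => ciInf_le hb.bddBelow (k, q)
  · exact ciSup_le fun q => le_ciSup hb.bddAbove (k, q)

theorem Delta_cont {d : ℕ} (v₁ : Td d → ℝ) (w₁ : Td d → Td d → ℝ) (w₂ : Td d → Td d → Td d → ℝ)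
    (hv₁ : Continuous v₁)
    (hw₁ : Continuous fun x : Td d × Td d => w₁ x.1 x.2)
    (hw₂ : Continuous fun x : Td d × Td d × Td d => w₂ x.1 x.2.1 x.2.2)
    (K : Td d) (z : ℂ) (hz : z ∉ bigBand w₂ K) :
    Continuous fun p => Delta v₁ w₁ w₂ K p z := by
  unfold Delta
  have hc : Continuous fun x : Td d × Td d => w₂ K x.1 x.2 :=
    hw₂.comp (continuous_const.prodMk continuous_id)
  have h1 : Continuous fun p => w₁ K p := hw₁.comp (continuous_const.prodMk continuous_id)
  have hk : Continuous (Function.uncurry fun (p t : Td d) =>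
      (v₁ t : ℂ) ^ 2 / ((w₂ K p t : ℂ) - z)) := by
    apply Continuous.div
    · fun_prop
    · exact (Complex.continuous_ofReal.comp hc).sub continuous_const
    · rintro ⟨p, q⟩
      exact ne_of_notin w₂ hw₂ K z hz p q
  have h2 := continuous_parametric_integral_of_continuous (μ := (volume : Measure (Td d))) hk
    isCompact_univ
  simp only [Measure.restrict_univ] at h2
  fun_prop

/-- For every `K ∈ T^d` and `z ∈ ℂ \ Σ_K`, the operator `T₁₁(K,z)` is a
Hilbert–Schmidt integral operator (its kernel is square integrable) and `T(K,z)` is a compact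
operator on `ℂ ⊕ L²(T^d)`. -/
theorem T_HilbertSchmidt_and_compact
    (d : ℕ) (hd : 1 ≤ d)
    (w₀ v₀ v₁ : Td d → ℝ) (w₁ : Td d → Td d → ℝ) (w₂ : Td d → Td d → Td d → ℝ)
    (hw₀ : Continuous w₀) (hv₀ : Continuous v₀) (hv₁ : Continuous v₁)
    (hw₁ : Continuous fun x : Td d × Td d => w₁ x.1 x.2)
    (hw₂ : Continuous fun x : Td d × Td d × Td d => w₂ x.1 x.2.1 x.2.2)
    (hsym : ∀ K p q : Td d, w₂ K p q = w₂ K q p)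
    (K : Td d) (z : ℂ) (hz : z ∉ SigK v₁ w₁ w₂ K)
    (T : Hkk d →L[ℂ] Hkk d) (hT : IsTOp w₀ v₀ v₁ w₁ w₂ K z T) :
    MemLp (fun x : Td d × Td d =>
        (v₁ x.1 : ℂ) * (v₁ x.2 : ℂ) /
          (2 * Delta v₁ w₁ w₂ K x.1 z * ((w₂ K x.1 x.2 : ℂ) - z))) 2
      (volume : Measure (Td d × Td d)) ∧
    IsCompactOperator T := by
  have hz1 : z ∉ bigBand w₂ K := fun h => hz (Or.inl h)
  have hne := ne_of_notin w₂ hw₂ K z hz1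
  have hD : ∀ p, Delta v₁ w₁ w₂ K p z ≠ 0 := fun p h =>
    hz (Or.inr ⟨p, fun hb => hz1 (band_sub w₂ hw₂ K p hb), h⟩)
  have hDc := Delta_cont v₁ w₁ w₂ hv₁ hw₁ hw₂ K z hz1
  have hc : Continuous fun x : Td d × Td d => w₂ K x.1 x.2 :=
    hw₂.comp (continuous_const.prodMk continuous_id)
  have hk : Continuous fun x : Td d × Td d => (v₁ x.1 : ℂ) * (v₁ x.2 : ℂ) /
          (2 * Delta v₁ w₁ w₂ K x.1 z * ((w₂ K x.1 x.2 : ℂ) - z)) := by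
    apply Continuous.div
    · fun_prop
    · exact (continuous_const.mul (hDc.comp continuous_fst)).mul
        ((Complex.continuous_ofReal.comp hc).sub continuous_const)
    · rintro ⟨p, q⟩
      exact mul_ne_zero (mul_ne_zero two_ne_zero (hD p)) (hne p q)
  refine ⟨?_, ?_⟩
  · obtain ⟨C, hC⟩ := (isCompact_range hk).isBounded.exists_norm_le
    exact MemLp.of_bound hk.aestronglyMeasurable C (ae_of_all _ fun x => hC _ ⟨x, rfl⟩)
  have ha : Continuous fun p => -(v₀ p : ℂ) / Delta v₁ w₁ w₂ K p z := by
    apply Continuous.div _ hDc hD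
    fun_prop
  let kc : C(Td d × Td d, ℂ) := ⟨_, hk⟩
  let L : Td d → (Hkk d →L[ℂ] ℂ) := fun p =>
    (-(v₀ p : ℂ) / Delta v₁ w₁ w₂ K p z) • WithLp.fstL 2 ℂ ℂ (L2 d) +
      (pairL (kc.curry p)).comp (WithLp.sndL 2 ℂ ℂ (L2 d))
  have hL : Continuous L := by
    apply Continuous.add
    · exact ha.smul continuous_const
    · exact (pairL_continuous.comp kc.curry.continuous).clm_comp continuous_const
  have hLg : ∀ p g, L p g = -((v₀ p : ℂ) * pk1 g) / Delta v₁ w₁ w₂ K p z +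
          (v₁ p : ℂ) / (2 * Delta v₁ w₁ w₂ K p z) *
            (∫ t, (v₁ t : ℂ) * (pk2 g) t / ((w₂ K p t : ℂ) - z)) := by
    intro p g
    change (-(v₀ p : ℂ) / Delta v₁ w₁ w₂ K p z) * pk1 g + pairL (kc.curry p) (pk2 g) = _
    rw [pairL_apply, ← integral_const_mul]
    congr 1
    · ring
    · congr 1
      ext t
      change (v₁ p : ℂ) * (v₁ t : ℂ) /
          (2 * Delta v₁ w₁ w₂ K p z * ((w₂ K p t : ℂ) - z)) * _ = _
      have := hD p
      have := hne p t
      field_simp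
  have hA := bdd_family_compact L hL
  set A := closure {f : BoundedContinuousFunction (Td d) ℂ |
    ∃ g : Hkk d, ‖g‖ ≤ 1 ∧ ∀ x, f x = L x g} with hAdef
  let Φ : ℂ × BoundedContinuousFunction (Td d) ℂ → Hkk d := fun x =>
    WithLp.toLp 2 (x.1, BoundedContinuousFunction.toLp (E := ℂ) 2 (volume : Measure (Td d)) ℂ x.2)
  have hΦ : Continuous Φ := by
    apply (WithLp.prod_continuous_toLp 2 ℂ (L2 d)).comp
    exact continuous_fst.prodMk ((ContinuousLinearMap.continuous _).comp continuous_snd)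
  refine ⟨Φ '' (Metric.closedBall (0 : ℂ) ‖T‖ ×ˢ A),
    ((isCompact_closedBall _ _).prod hA).image hΦ, ?_⟩
  filter_upwards [Metric.closedBall_mem_nhds (0 : Hkk d) one_pos] with g hg
  rw [mem_closedBall_zero_iff] at hg
  let f : BoundedContinuousFunction (Td d) ℂ :=
    BoundedContinuousFunction.mkOfCompact ⟨fun p => L p g, hL.clm_apply continuous_const⟩
  have hf : ∀ x, f x = L x g := fun _ => rfl
  refine ⟨(pk1 (T g), f), ⟨?_, subset_closure ⟨g, hg, hf⟩⟩, ?_⟩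
  · rw [mem_closedBall_zero_iff]
    have h1 : ‖pk1 (T g)‖ ≤ ‖T g‖ := WithLp.norm_fst_le _ (T g)
    have h2 := T.le_opNorm g
    change ‖pk1 (T g)‖ ≤ _
    nlinarith [norm_nonneg T, norm_nonneg g]
  · have h2 : BoundedContinuousFunction.toLp (E := ℂ) 2 (volume : Measure (Td d)) ℂ f
        = pk2 (T g) := by
      apply Lp.ext
      refine (BoundedContinuousFunction.coeFn_toLp 2 (volume : Measure (Td d)) ℂ f).trans ?_
      refine EventuallyEq.trans (ae_of_all _ fun p => ?_) (hT g).2.symm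
      exact (hf p).trans (hLg p g)
    change WithLp.toLp 2 (pk1 (T g), _) = T g
    rw [h2]
    rfl
end
end

section
/- (Faddeev equation) For every K ∈ T^d, a number z ∈ ℂ \ Σ_K is an eigenvalue of the operator H(K) if and only if λ = 1 is an eigenvalue of the compact operator T(K, z); moreover, the eigenvalues z of H(K) and 1 of T(K,z) have the same multiplicities, i.e. dim ker(H(K) − z) = dim ker(I − T(K, z)). -/
open MeasureTheory Complex Filter Topology Set

noncomputable section

/-- The swap map on `L²((T^d)²)`, `(S f)(p,q) = f(q,p)`. -/
def swapL (d : ℕ) : L2two d →ₗ[ℂ] L2two d :=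
  Lp.compMeasurePreservingₗ ℂ Prod.swap MeasureTheory.Measure.measurePreserving_swap

/-- The subspace `L²_sym((T^d)²)` of symmetric functions, as the fixed-point space of swap. -/
def symSub (d : ℕ) : Submodule ℂ (L2two d) := LinearMap.ker (swapL d - LinearMap.id)

abbrev L2sym (d : ℕ) := ↥(symSub d)

instance (d : ℕ) : CompleteSpace (L2sym d) := by
  have hiso : Isometry (swapL d) :=
    Lp.isometry_compMeasurePreserving MeasureTheory.Measure.measurePreserving_swap
  have hcl : IsClosed ((symSub d : Set (L2two d))) := by
    have h1 : (symSub d : Set (L2two d)) = {f | swapL d f = f} := by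
      ext f
      simp [symSub, LinearMap.mem_ker, sub_eq_zero, LinearMap.sub_apply]
    rw [h1]
    exact isClosed_eq hiso.continuous continuous_id
  exact hcl.completeSpace_coe

/-- The Hilbert space `H = ℂ ⊕ L²(T^d) ⊕ L²_sym((T^d)²)`. -/
abbrev H3 (d : ℕ) := WithLp 2 (ℂ × WithLp 2 (L2 d × L2sym d))

/-- The zero-particle component. -/
def p0 {d : ℕ} (f : H3 d) : ℂ := (WithLp.equiv 2 _ f).1

/-- The one-particle component. -/
def p1 {d : ℕ} (f : H3 d) : L2 d := (WithLp.equiv 2 _ ((WithLp.equiv 2 _ f).2)).1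

/-- The two-particle component, as an element of `L²((T^d)²)`. -/
def p2 {d : ℕ} (f : H3 d) : L2two d :=
  ((WithLp.equiv 2 _ ((WithLp.equiv 2 _ f).2)).2 : L2sym d)

variable {d : ℕ}

/-- The defining equations of the `3×3` operator matrix `H(K)` acting on
`ℂ ⊕ L²(T^d) ⊕ L²_sym((T^d)²)`:
`(H f)₀ = w₀(K) f₀ + ∫ v₀(t) f₁(t) dt`,
`(H f)₁(p) = v₀(p) f₀ + w₁(K; p) f₁(p) + ∫ v₁(t) f₂(p,t) dt`,
`(H f)₂(p,q) = (1/2)(v₁(p) f₁(q) + v₁(q) f₁(p)) + w₂(K; p,q) f₂(p,q)`. -/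
def IsHamiltonian {d : ℕ} (w₀ v₀ v₁ : Td d → ℝ) (w₁ : Td d → Td d → ℝ)
    (w₂ : Td d → Td d → Td d → ℝ) (K : Td d) (H : H3 d →L[ℂ] H3 d) : Prop :=
  ∀ f : H3 d,
    (p0 (H f) = (w₀ K : ℂ) * p0 f + (∫ t, (v₀ t : ℂ) * (p1 f) t)) ∧
    (⇑(p1 (H f)) =ᵐ[volume] fun p =>
        (v₀ p : ℂ) * p0 f + (w₁ K p : ℂ) * (p1 f) p +
          (∫ t, (v₁ t : ℂ) * (p2 f) (p, t))) ∧
    (⇑(p2 (H f)) =ᵐ[volume] fun x : Td d × Td d =>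
        ((v₁ x.1 : ℂ) * (p1 f) x.2 + (v₁ x.2 : ℂ) * (p1 f) x.1) / 2 +
          (w₂ K x.1 x.2 : ℂ) * (p2 f) x)

lemma H3_extIff {d : ℕ} (x y : H3 d) : x = y ↔ p0 x = p0 y ∧ p1 x = p1 y ∧ p2 x = p2 y := by
  constructor
  · rintro rfl; simp
  · rintro ⟨h0, h1, h2⟩
    apply (WithLp.equiv 2 _).injective
    refine Prod.ext h0 ?_
    apply (WithLp.equiv 2 _).injective
    exact Prod.ext h1 (Subtype.ext h2)

lemma Hkk_extIff {d : ℕ} (x y : Hkk d) : x = y ↔ pk1 x = pk1 y ∧ pk2 x = pk2 y := by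
  constructor
  · rintro rfl; simp
  · rintro ⟨h0, h1⟩
    apply (WithLp.equiv 2 _).injective
    exact Prod.ext h0 h1

lemma w2_sub_ne {d : ℕ} (v₁ : Td d → ℝ) (w₁ : Td d → Td d → ℝ) (w₂ : Td d → Td d → Td d → ℝ)
    (hw₂ : Continuous fun x : Td d × Td d × Td d => w₂ x.1 x.2.1 x.2.2)
    (K : Td d) (z : ℂ) (hz : z ∉ SigK v₁ w₁ w₂ K) (p q : Td d) : (w₂ K p q : ℂ) - z ≠ 0 := by
  intro h
  apply hz
  left
  have hc : Continuous fun x : Td d × Td d => w₂ K x.1 x.2 :=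
    hw₂.comp (continuous_const.prodMk (continuous_fst.prodMk continuous_snd))
  have hr := isCompact_range hc
  exact ⟨w₂ K p q, ⟨ciInf_le hr.bddBelow (p, q), le_ciSup hr.bddAbove (p, q)⟩, sub_eq_zero.1 h⟩

lemma Delta_ne {d : ℕ} (v₁ : Td d → ℝ) (w₁ : Td d → Td d → ℝ) (w₂ : Td d → Td d → Td d → ℝ)
    (hw₂ : Continuous fun x : Td d × Td d × Td d => w₂ x.1 x.2.1 x.2.2)
    (K : Td d) (z : ℂ) (hz : z ∉ SigK v₁ w₁ w₂ K) (p : Td d) : Delta v₁ w₁ w₂ K p z ≠ 0 := by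
  intro h
  apply hz
  right
  refine ⟨p, ?_, h⟩
  rintro ⟨x, ⟨h1, h2⟩, rfl⟩
  apply hz
  left
  have hc : Continuous fun x : Td d × Td d => w₂ K x.1 x.2 :=
    hw₂.comp (continuous_const.prodMk (continuous_fst.prodMk continuous_snd))
  have hr := isCompact_range hc
  refine ⟨x, ⟨le_trans ?_ h1, h2.trans ?_⟩, rfl⟩
  · exact le_ciInf fun q => ciInf_le hr.bddBelow (p, q)
  · exact ciSup_le fun q => le_ciSup hr.bddAbove (p, q)

/-- The two-particle component recovered from the one-particle component. -/
def F2 {d : ℕ} (v₁ : Td d → ℝ) (w₂ : Td d → Td d → Td d → ℝ) (K : Td d) (z : ℂ)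
    (f : Td d → ℂ) (x : Td d × Td d) : ℂ :=
  ((w₂ K x.1 x.2 : ℂ) - z)⁻¹ * (-(1 / 2)) * ((v₁ x.1 : ℂ) * f x.2 + (v₁ x.2 : ℂ) * f x.1)

lemma F2_swap {d : ℕ} (v₁ : Td d → ℝ) (w₂ : Td d → Td d → Td d → ℝ)
    (hsym : ∀ K p q : Td d, w₂ K p q = w₂ K q p) (K : Td d) (z : ℂ)
    (f : Td d → ℂ) (x : Td d × Td d) : F2 v₁ w₂ K z f x.swap = F2 v₁ w₂ K z f x := by
  simp only [F2, Prod.fst_swap, Prod.snd_swap, hsym K x.2 x.1]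
  ring

lemma memLp_bdd_mul {X : Type*} [TopologicalSpace X] [CompactSpace X] [MeasurableSpace X]
    [OpensMeasurableSpace X] [SecondCountableTopology X] (μ : Measure X)
    (c : X → ℂ) (hc : Continuous c) (f : X → ℂ) (hf : MemLp f 2 μ) :
    MemLp (fun x => c x * f x) 2 μ := by
  obtain ⟨C, hC⟩ := (isCompact_range hc).isBounded.exists_norm_le
  refine hf.of_le_mul (c := C) (hc.aestronglyMeasurable.mul hf.1) (ae_of_all _ fun x => ?_)
  rw [norm_mul]
  exact mul_le_mul_of_nonneg_right (hC _ ⟨x, rfl⟩) (norm_nonneg _)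

lemma F2_memLp {d : ℕ} (v₁ : Td d → ℝ) (w₂ : Td d → Td d → Td d → ℝ) (hv₁ : Continuous v₁)
    (K : Td d) (z : ℂ)
    (hw : Continuous fun x : Td d × Td d => w₂ K x.1 x.2)
    (hne : ∀ p q, (w₂ K p q : ℂ) - z ≠ 0)
    (f : Td d → ℂ) (hf : MemLp f 2 volume) :
    MemLp (F2 v₁ w₂ K z f) 2 (volume : Measure (Td d × Td d)) := by
  unfold F2
  refine memLp_bdd_mul _ _ ?_ _ (MemLp.add ?_ ?_)
  · refine Continuous.mul (Continuous.inv₀ ?_ fun x => hne _ _) continuous_const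
    exact (Complex.continuous_ofReal.comp hw).sub continuous_const
  · refine memLp_bdd_mul _ (fun x : Td d × Td d => (v₁ x.1 : ℂ)) ?_ (fun x => f x.2) ?_
    · exact Complex.continuous_ofReal.comp (hv₁.comp continuous_fst)
    · exact hf.comp_snd _
  · refine memLp_bdd_mul _ (fun x : Td d × Td d => (v₁ x.2 : ℂ)) ?_ (fun x => f x.1) ?_
    · exact Complex.continuous_ofReal.comp (hv₁.comp continuous_snd)
    · exact hf.comp_fst _

lemma F2_integral {d : ℕ} (v₁ : Td d → ℝ) (w₂ : Td d → Td d → Td d → ℝ) (hv₁ : Continuous v₁)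
    (K : Td d) (z : ℂ)
    (hw : Continuous fun x : Td d × Td d => w₂ K x.1 x.2)
    (hne : ∀ p q, (w₂ K p q : ℂ) - z ≠ 0)
    (f : Td d → ℂ) (hf : MemLp f 2 volume) (p : Td d) :
    ∫ t, (v₁ t : ℂ) * F2 v₁ w₂ K z f (p, t) =
      - (v₁ p : ℂ) / 2 * (∫ t, (v₁ t : ℂ) * f t / ((w₂ K p t : ℂ) - z))
      - f p / 2 * ∫ t, (v₁ t : ℂ) ^ 2 / ((w₂ K p t : ℂ) - z) := by
  have hv : Continuous fun t => (v₁ t : ℂ) := Complex.continuous_ofReal.comp hv₁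
  have hd : Continuous fun t => ((w₂ K p t : ℂ) - z) :=
    (Complex.continuous_ofReal.comp (hw.comp (continuous_const.prodMk continuous_id))).sub
      continuous_const
  have i1 : Integrable fun t => (v₁ t : ℂ) * f t / ((w₂ K p t : ℂ) - z) := by
    have := memLp_bdd_mul volume (fun t => (v₁ t : ℂ) / ((w₂ K p t : ℂ) - z))
      (hv.div hd fun t => hne _ _) f hf
    refine (this.integrable (by norm_num)).congr (ae_of_all _ fun t => ?_)
    simp only
    ring
  have i2 : Integrable fun t => (v₁ t : ℂ) ^ 2 / ((w₂ K p t : ℂ) - z) := by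
    have hc : Continuous fun t => (v₁ t : ℂ) ^ 2 / ((w₂ K p t : ℂ) - z) :=
      (hv.pow 2).div hd fun t => hne _ _
    exact hc.integrable_of_hasCompactSupport (HasCompactSupport.of_compactSpace _)
  rw [← integral_const_mul, ← integral_const_mul, ← integral_sub (i1.const_mul _) (i2.const_mul _)]
  congr 1
  ext t
  simp only [F2]
  ring

lemma H_eig_iff {d : ℕ} (w₀ v₀ v₁ : Td d → ℝ) (w₁ : Td d → Td d → ℝ)
    (w₂ : Td d → Td d → Td d → ℝ) (K : Td d) (z : ℂ)
    (hne : ∀ p q, (w₂ K p q : ℂ) - z ≠ 0)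
    (H : H3 d →L[ℂ] H3 d) (hH : IsHamiltonian w₀ v₀ v₁ w₁ w₂ K H) (f : H3 d) :
    H f = z • f ↔
      ((w₀ K : ℂ) * p0 f + (∫ t, (v₀ t : ℂ) * (p1 f) t) = z * p0 f) ∧
      (∀ᵐ p, (v₀ p : ℂ) * p0 f + (w₁ K p : ℂ) * (p1 f) p +
          (∫ t, (v₁ t : ℂ) * (p2 f) (p, t)) = z * (p1 f) p) ∧
      (p2 f =ᵐ[volume] F2 v₁ w₂ K z (p1 f)) := by
  obtain ⟨h0, h1, h2⟩ := hH f
  rw [H3_extIff]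
  have e0 : p0 (z • f) = z * p0 f := rfl
  have e1 : p1 (z • f) = z • p1 f := rfl
  have e2 : p2 (z • f) = z • p2 f := rfl
  rw [e0, e1, e2, h0]
  refine and_congr Iff.rfl (and_congr ?_ ?_)
  · rw [Lp.ext_iff]
    have := Lp.coeFn_smul z (p1 f)
    constructor
    · intro h
      filter_upwards [h, this, h1] with p a b c
      rw [← c, a, b]; rfl
    · intro h
      filter_upwards [h, this, h1] with p a b c
      rw [c, a, b]; rfl
  · rw [Lp.ext_iff]
    have := Lp.coeFn_smul z (p2 f)
    constructor
    · intro h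
      filter_upwards [h, this, h2] with p a b c
      have hn := hne p.1 p.2
      rw [b, c, Pi.smul_apply, smul_eq_mul] at a
      simp only [F2]
      field_simp
      linear_combination 2 * a
    · intro h
      filter_upwards [h, this, h2] with p a b c
      have hn := hne p.1 p.2
      rw [b, c, Pi.smul_apply, smul_eq_mul, a]
      simp only [F2]
      field_simp
      ring

lemma T_eig_iff {d : ℕ} (w₀ v₀ v₁ : Td d → ℝ) (w₁ : Td d → Td d → ℝ)
    (w₂ : Td d → Td d → Td d → ℝ) (hv₁ : Continuous v₁) (K : Td d) (z : ℂ)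
    (hw : Continuous fun x : Td d × Td d => w₂ K x.1 x.2)
    (hne : ∀ p q, (w₂ K p q : ℂ) - z ≠ 0)
    (hD : ∀ p, Delta v₁ w₁ w₂ K p z ≠ 0)
    (T : Hkk d →L[ℂ] Hkk d) (hT : IsTOp w₀ v₀ v₁ w₁ w₂ K z T) (g : Hkk d) :
    T g = g ↔
      ((w₀ K : ℂ) * pk1 g + (∫ t, (v₀ t : ℂ) * (pk2 g) t) = z * pk1 g) ∧
      (∀ᵐ p, (v₀ p : ℂ) * pk1 g + (w₁ K p : ℂ) * (pk2 g) p +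
          (∫ t, (v₁ t : ℂ) * F2 v₁ w₂ K z (pk2 g) (p, t)) = z * (pk2 g) p) := by
  obtain ⟨h0, h1⟩ := hT g
  rw [Hkk_extIff, h0]
  have key : ∀ p, (-((v₀ p : ℂ) * pk1 g) / Delta v₁ w₁ w₂ K p z +
          (v₁ p : ℂ) / (2 * Delta v₁ w₁ w₂ K p z) *
            (∫ t, (v₁ t : ℂ) * (pk2 g) t / ((w₂ K p t : ℂ) - z)) = pk2 g p) ↔
      (v₀ p : ℂ) * pk1 g + (w₁ K p : ℂ) * (pk2 g) p +
          (∫ t, (v₁ t : ℂ) * F2 v₁ w₂ K z (pk2 g) (p, t)) = z * (pk2 g) p := by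
    intro p
    rw [F2_integral v₁ w₂ hv₁ K z hw hne _ (Lp.memLp _) p]
    have hd := hD p
    have hdef : Delta v₁ w₁ w₂ K p z =
      (w₁ K p : ℂ) - z - (1 / 2) * ∫ t, (v₁ t : ℂ) ^ 2 / ((w₂ K p t : ℂ) - z) := rfl
    generalize Delta v₁ w₁ w₂ K p z = D at *
    generalize (∫ t, (v₁ t : ℂ) ^ 2 / ((w₂ K p t : ℂ) - z)) = I at *
    generalize (∫ t, (v₁ t : ℂ) * (pk2 g) t / ((w₂ K p t : ℂ) - z)) = J at *
    generalize pk2 g p = y at *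
    have hx : -((v₀ p : ℂ) * pk1 g) / D + (v₁ p : ℂ) / (2 * D) * J =
        (-((v₀ p : ℂ) * pk1 g) + (v₁ p : ℂ) / 2 * J) / D := by
      field_simp
    rw [hx, div_eq_iff hd, hdef]
    constructor
    · intro h; linear_combination -h
    · intro h; linear_combination -h
  refine and_congr ?_ ?_
  · constructor
    · intro h; linear_combination h
    · intro h; linear_combination h
  · rw [Lp.ext_iff]
    constructor
    · intro h
      filter_upwards [h, h1] with p a b
      exact (key p).1 (b.symm.trans a)
    · intro h
      filter_upwards [h, h1] with p a b
      exact b.trans ((key p).2 a)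

lemma finrank_ker_eq {V W : Type*} [AddCommGroup V] [Module ℂ V] [AddCommGroup W] [Module ℂ W]
    (φ : V →ₗ[ℂ] W) (A : Submodule ℂ V) (B : Submodule ℂ W) (h1 : ∀ f ∈ A, φ f ∈ B)
    (h2 : ∀ f ∈ A, φ f = 0 → f = 0) (h3 : ∀ g ∈ B, ∃ f ∈ A, φ f = g) :
    Module.finrank ℂ A = Module.finrank ℂ B := by
  refine LinearEquiv.finrank_eq (LinearEquiv.ofBijective (φ.restrict h1) ⟨?_, ?_⟩)
  · rw [← LinearMap.ker_eq_bot, LinearMap.ker_eq_bot']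
    rintro ⟨f, hf⟩ h
    exact Subtype.ext (h2 f hf (congrArg Subtype.val h))
  · rintro ⟨g, hg⟩
    obtain ⟨f, hf, h⟩ := h3 g hg
    exact ⟨⟨f, hf⟩, Subtype.ext h⟩

/-- Forget the two-particle component. -/
def forget2 (d : ℕ) : H3 d →ₗ[ℂ] Hkk d where
  toFun f := WithLp.toLp 2 (p0 f, p1 f)
  map_add' _ _ := rfl
  map_smul' _ _ := rfl

/-- Assemble an element of the Hilbert space from its components. -/
def mk3 {d : ℕ} (a : ℂ) (b : L2 d) (c : L2sym d) : H3 d :=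
  WithLp.toLp 2 (a, WithLp.toLp 2 (b, c))

lemma mem_symSub {d : ℕ} (F : Td d × Td d → ℂ) (hF : MemLp F 2 volume)
    (hs : ∀ x, F x.swap = F x) : hF.toLp F ∈ symSub d := by
  rw [symSub, LinearMap.mem_ker, LinearMap.sub_apply, sub_eq_zero, LinearMap.id_apply]
  change Lp.compMeasurePreserving Prod.swap Measure.measurePreserving_swap (hF.toLp F) = _
  rw [Lp.toLp_compMeasurePreserving]
  congr 1
  ext x
  exact hs x

/-- **the Faddeev equation.** For `z ∈ ℂ \ Σ_K`, `z` is an eigenvalue of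
`H(K)` iff `1` is an eigenvalue of `T(K,z)`, and the multiplicities coincide. -/
theorem faddeev_equation
    (d : ℕ) (hd : 1 ≤ d)
    (w₀ v₀ v₁ : Td d → ℝ) (w₁ : Td d → Td d → ℝ) (w₂ : Td d → Td d → Td d → ℝ)
    (hw₀ : Continuous w₀) (hv₀ : Continuous v₀) (hv₁ : Continuous v₁)
    (hw₁ : Continuous fun x : Td d × Td d => w₁ x.1 x.2)
    (hw₂ : Continuous fun x : Td d × Td d × Td d => w₂ x.1 x.2.1 x.2.2)
    (hsym : ∀ K p q : Td d, w₂ K p q = w₂ K q p)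
    (K : Td d) (z : ℂ) (hz : z ∉ SigK v₁ w₁ w₂ K)
    (H : H3 d →L[ℂ] H3 d) (hH : IsHamiltonian w₀ v₀ v₁ w₁ w₂ K H)
    (T : Hkk d →L[ℂ] Hkk d) (hT : IsTOp w₀ v₀ v₁ w₁ w₂ K z T) :
    ((∃ f : H3 d, f ≠ 0 ∧ H f = z • f) ↔ (∃ g : Hkk d, g ≠ 0 ∧ T g = g)) ∧
    Module.finrank ℂ (LinearMap.ker ((H - z • (1 : H3 d →L[ℂ] H3 d) : H3 d →L[ℂ] H3 d) : H3 d →ₗ[ℂ] H3 d)) =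
      Module.finrank ℂ (LinearMap.ker (((1 : Hkk d →L[ℂ] Hkk d) - T : Hkk d →L[ℂ] Hkk d) : Hkk d →ₗ[ℂ] Hkk d)) := by
  have hw : Continuous fun x : Td d × Td d => w₂ K x.1 x.2 :=
    hw₂.comp (continuous_const.prodMk (continuous_fst.prodMk continuous_snd))
  have hne := w2_sub_ne v₁ w₁ w₂ hw₂ K z hz
  have hD := Delta_ne v₁ w₁ w₂ hw₂ K z hz
  have HE := H_eig_iff w₀ v₀ v₁ w₁ w₂ K z hne H hH
  have TE := T_eig_iff w₀ v₀ v₁ w₁ w₂ hv₁ K z hw hne hD T hT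
  have hint : ∀ f : H3 d, (p2 f =ᵐ[volume] F2 v₁ w₂ K z (p1 f)) →
      ∀ᵐ p, (∫ t, (v₁ t : ℂ) * (p2 f) (p, t)) =
        ∫ t, (v₁ t : ℂ) * F2 v₁ w₂ K z (p1 f) (p, t) := by
    intro f hf
    filter_upwards [Measure.ae_ae_of_ae_prod hf] with p hp
    refine integral_congr_ae ?_
    filter_upwards [hp] with t ht
    rw [ht]
  -- the forward direction
  have fwd : ∀ f : H3 d, H f = z • f → T (forget2 d f) = forget2 d f := by
    intro f hf
    obtain ⟨h0, h1, h2⟩ := (HE f).1 hf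
    refine (TE _).2 ⟨h0, ?_⟩
    filter_upwards [h1, hint f h2] with p a b
    rw [b] at a
    exact a
  have inj : ∀ f : H3 d, H f = z • f → forget2 d f = 0 → f = 0 := by
    intro f hf hg
    obtain ⟨h0, h1, h2⟩ := (HE f).1 hf
    obtain ⟨g0, g1⟩ := (Hkk_extIff _ _).1 hg
    refine (H3_extIff _ _).2 ⟨g0, g1, ?_⟩
    have g1z : p1 f = 0 := g1
    have hz0 : p2 (0 : H3 d) = 0 := rfl
    rw [hz0]
    apply Lp.ext
    have z1 : (p1 f : Td d → ℂ) =ᵐ[volume] 0 := by rw [g1z]; exact Lp.coeFn_zero _ _ _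
    have z2 : ∀ᵐ x : Td d × Td d, p1 f x.1 = 0 :=
      Measure.quasiMeasurePreserving_fst.ae z1
    have z3 : ∀ᵐ x : Td d × Td d, p1 f x.2 = 0 :=
      Measure.quasiMeasurePreserving_snd.ae z1
    filter_upwards [h2, z2, z3, Lp.coeFn_zero ℂ 2 (volume : Measure (Td d × Td d))]
      with x a b c e
    rw [a, e]
    simp [F2, b, c]
  have surj : ∀ g : Hkk d, T g = g → ∃ f : H3 d, H f = z • f ∧ forget2 d f = g := by
    intro g hg
    have hm := F2_memLp v₁ w₂ hv₁ K z hw hne (pk2 g) (Lp.memLp _)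
    have hs := mem_symSub _ hm (F2_swap v₁ w₂ hsym K z (pk2 g))
    obtain ⟨h0, h1⟩ := (TE g).1 hg
    refine ⟨mk3 (pk1 g) (pk2 g) ⟨_, hs⟩, ?_, rfl⟩
    have h2 : p2 (mk3 (pk1 g) (pk2 g) ⟨_, hs⟩) =ᵐ[volume]
        F2 v₁ w₂ K z (p1 (mk3 (pk1 g) (pk2 g) ⟨_, hs⟩)) := hm.coeFn_toLp
    refine (HE _).2 ⟨h0, ?_, h2⟩
    filter_upwards [h1, hint _ h2] with p a b
    rw [b]
    exact a
  have memH : ∀ f : H3 d, f ∈ LinearMap.ker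
      ((H - z • (1 : H3 d →L[ℂ] H3 d) : H3 d →L[ℂ] H3 d) : H3 d →ₗ[ℂ] H3 d) ↔ H f = z • f := by
    intro f
    rw [LinearMap.mem_ker]
    exact sub_eq_zero
  have memT : ∀ g : Hkk d, g ∈ LinearMap.ker
      (((1 : Hkk d →L[ℂ] Hkk d) - T : Hkk d →L[ℂ] Hkk d) : Hkk d →ₗ[ℂ] Hkk d) ↔ T g = g := by
    intro g
    rw [LinearMap.mem_ker]
    exact sub_eq_zero.trans eq_comm
  refine ⟨⟨?_, ?_⟩, ?_⟩
  · rintro ⟨f, hf0, hf⟩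
    exact ⟨forget2 d f, fun h => hf0 (inj f hf h), fwd f hf⟩
  · rintro ⟨g, hg0, hg⟩
    obtain ⟨f, hf, rfl⟩ := surj g hg
    exact ⟨f, fun h => hg0 (by rw [h, map_zero]), hf⟩
  · exact finrank_ker_eq (forget2 d) _ _ (fun f hf => (memT _).2 (fwd f ((memH f).1 hf)))
      (fun f hf h => inj f ((memH f).1 hf) h)
      (fun g hg => by
        obtain ⟨f, hf, h⟩ := surj g ((memT g).1 hg)
        exact ⟨f, (memH f).2 hf, h⟩)
end
end
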